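/- Let 𝒜 be a reduced inverse automaton over Ã, let p, q be states of 𝒜 and let w be a nonempty reduced word over Ã. Let u be the longest prefix of w labeling a path in 𝒜 starting at p and let v be the longest suffix of w labeling a path in 𝒜 ending at q. Suppose |u| + |v| ≥ |w|, so that there are (possibly empty) words x, y, z with u = xy, v = yz and w = xyz, and let p', p'', q', q'' be the states with paths p →x p' →y p'' and q' →y q'' →z q in 𝒜. Then for every reduced inverse automaton 𝓑, 𝒜 →exp^{(p,w,q)} 𝓑 if and only if 𝒜 →i^{p'=q'} 𝓑, if and only if 𝒜 →i^{p''=q''} 𝓑 (where identifying a state with itself leaves the automaton unchanged). -/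

import Mathlib

open Function

/-- A letter of the symmetrized alphabet Ã: `(a, true)` stands for `a ∈ A` and
`(a, false)` for `a⁻¹ ∈ A⁻¹`. -/
abbrev Ltr (A : Type) := A × Bool

/-- Inversion of letters of Ã. -/
def Ltr.inv {A : Type} (x : Ltr A) : Ltr A := (x.1, !x.2)

/-- The inverse `u⁻¹` of a word `u` over Ã. -/
def wordInv {A : Type} (w : List (Ltr A)) : List (Ltr A) := (w.map Ltr.inv).reverse

/-- A word over Ã is reduced iff it has no factor of the form `a a⁻¹` or `a⁻¹ a`. -/
def IsReducedWord {A : Type} (w : List (Ltr A)) : Prop :=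
  ∀ (u v : List (Ltr A)) (a : A) (b : Bool), w ≠ u ++ (a, b) :: (a, !b) :: v

/-- An automaton over the symmetrized alphabet Ã, with a bundled state type `Q`,
an initial state `q0` and a set `E` of transitions. -/
structure Autom (A : Type) : Type 1 where
  Q : Type
  q0 : Q
  E : Set (Q × Ltr A × Q)

namespace Autom

variable {A : Type}

/-- Paths using only transitions in the set `T`. -/
inductive PathOn (M : Autom A) (T : Set (M.Q × Ltr A × M.Q)) :
    M.Q → List (Ltr A) → M.Q → Prop
  | nil (q : M.Q) : PathOn M T q [] q
  | cons {p q r : M.Q} {a : Ltr A} {w : List (Ltr A)} :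
      (p, a, q) ∈ T → PathOn M T q w r → PathOn M T p (a :: w) r

/-- `M.Path p u q` : the word `u` labels a path from state `p` to state `q` in `M`. -/
def Path (M : Autom A) : M.Q → List (Ltr A) → M.Q → Prop := M.PathOn M.E

/-- The language L(𝒜) of words labeling a path from `q0` to `q0`. -/
def lang (M : Autom A) : Set (List (Ltr A)) := {w | M.Path M.q0 w M.q0}

/-- The set L(𝒜)ρ of reductions (in the free group `F(A)`) of words of L(𝒜). -/
def langRho (M : Autom A) : Set (FreeGroup A) := FreeGroup.mk '' M.lang

/-- Dual automaton: `(p,a,q)` is an edge iff `(q,a⁻¹,p)` is one. -/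
def Dual (M : Autom A) : Prop := ∀ p a q, (p, a, q) ∈ M.E ↔ (q, Ltr.inv a, p) ∈ M.E

/-- Deterministic automaton. -/
def Deterministic (M : Autom A) : Prop :=
  ∀ p a q q', (p, a, q) ∈ M.E → (p, a, q') ∈ M.E → q = q'

/-- Trim automaton: every state lies on a path from `q0` to `q0`. -/
def Trim (M : Autom A) : Prop := ∀ q, ∃ u v, M.Path M.q0 u q ∧ M.Path q v M.q0

/-- Inverse automaton: deterministic, trim and dual. -/
def IsInv (M : Autom A) : Prop := M.Deterministic ∧ M.Trim ∧ M.Dual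

/-- Reduced automaton: every state lies on a path from `q0` to `q0` labeled by
a reduced word. -/
def IsRed (M : Autom A) : Prop :=
  ∀ q, ∃ u v, IsReducedWord (u ++ v) ∧ M.Path M.q0 u q ∧ M.Path q v M.q0

/-- Homomorphisms of automata. -/
def IsHom (M N : Autom A) (φ : M.Q → N.Q) : Prop :=
  φ M.q0 = N.q0 ∧ ∀ p a q, (p, a, q) ∈ M.E → (φ p, a, φ q) ∈ N.E

/-- Isomorphism of automata. -/
def Isomorphic (M N : Autom A) : Prop :=
  ∃ φ : M.Q ≃ N.Q, M.IsHom N φ ∧ N.IsHom M φ.symm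

/-- `N` is (isomorphic to) the automaton obtained from `M` by identifying the two
states `p` and `q`. -/
def IsIdentification (M : Autom A) (p q : M.Q) (N : Autom A) : Prop :=
  ∃ φ : M.Q → N.Q,
    Surjective φ ∧ φ M.q0 = N.q0 ∧
    (∀ x y, φ x = φ y ↔ x = y ∨ (x = p ∧ y = q) ∨ (x = q ∧ y = p)) ∧
    (∀ e : N.Q × Ltr A × N.Q, e ∈ N.E ↔ ∃ e' ∈ M.E, e = (φ e'.1, e'.2.1, φ e'.2.2))

/-- `N` is (isomorphic to) the automaton obtained from `M` by deleting the state `q`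
and all transitions involving it. -/
def IsDeletion (M : Autom A) (q : M.Q) (N : Autom A) : Prop :=
  ∃ φ : N.Q → M.Q,
    Injective φ ∧ Set.range φ = {x | x ≠ q} ∧ φ N.q0 = M.q0 ∧
    (∀ e : N.Q × Ltr A × N.Q, e ∈ N.E ↔ (φ e.1, e.2.1, φ e.2.2) ∈ M.E)

/-- Elementary reduction of type 1. -/
def Red1 (M N : Autom A) : Prop :=
  ∃ p q r a, p ≠ q ∧ (r, a, p) ∈ M.E ∧ (r, a, q) ∈ M.E ∧ M.IsIdentification p q N

/-- Elementary reduction of type 2. -/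
def Red2 (M N : Autom A) : Prop :=
  ∃ (p q : M.Q) (a : Ltr A), q ≠ M.q0 ∧ (p, a, q) ∈ M.E ∧ (q, Ltr.inv a, p) ∈ M.E ∧
    (∀ e ∈ M.E, e.1 = q ∨ e.2.2 = q → e = (p, a, q) ∨ e = (q, Ltr.inv a, p)) ∧
    M.IsDeletion q N

/-- `N` is (isomorphic to) the reduction `Mρ` of `M`: perform elementary reductions
of type 1 until the automaton is deterministic, then elementary reductions of type 2
until none is possible. -/
def ReductionOf (M N : Autom A) : Prop :=
  ∃ M₁, Relation.ReflTransGen Red1 M M₁ ∧ M₁.Deterministic ∧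
    Relation.ReflTransGen Red2 M₁ N ∧ ∀ N', ¬ Red2 N N'

/-- `N` is (isomorphic to) the expansion of `M` by `(p, w, q)`: a new path labeled `w`
from `p` to `q` (together with its inverse path) whose intermediate states are new. -/
def IsExpansion (M : Autom A) (p : M.Q) (w : List (Ltr A)) (q : M.Q) (N : Autom A) : Prop :=
  w ≠ [] ∧
  ∃ (φ : M.Q → N.Q) (c : Fin (w.length + 1) → N.Q),
    Injective φ ∧ φ M.q0 = N.q0 ∧ c 0 = φ p ∧ c (Fin.last w.length) = φ q ∧
    (∀ i : Fin (w.length + 1), 0 < (i : ℕ) → (i : ℕ) < w.length → c i ∉ Set.range φ) ∧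
    (∀ i j : Fin (w.length + 1), 0 < (i : ℕ) → (i : ℕ) < w.length → c i = c j → i = j) ∧
    (∀ x : N.Q, (∃ y, φ y = x) ∨ ∃ i, c i = x) ∧
    (∀ e : N.Q × Ltr A × N.Q, e ∈ N.E ↔
      ((∃ e' ∈ M.E, e = (φ e'.1, e'.2.1, φ e'.2.2)) ∨
        ∃ i : Fin w.length,
          e = (c i.castSucc, w.get i, c i.succ) ∨
          e = (c i.succ, Ltr.inv (w.get i), c i.castSucc)))

/-- `M →exp^{(p,w,q)} N` : `N` is (isomorphic to) the reduction of the expansion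
of `M` by `(p,w,q)`. -/
def ExpStep (M : Autom A) (p : M.Q) (w : List (Ltr A)) (q : M.Q) (N : Autom A) : Prop :=
  ∃ N' N'', M.IsExpansion p w q N' ∧ ReductionOf N' N'' ∧ Isomorphic N'' N

/-- `M →re^{(p,w,q)} N` : a reduced expansion, i.e. an expansion-then-reduction in which
`M` embeds in `N`. -/
def REStep (M : Autom A) (p : M.Q) (w : List (Ltr A)) (q : M.Q) (N : Autom A) : Prop :=
  M.ExpStep p w q N ∧ ∃ ψ : M.Q → N.Q, Injective ψ ∧ M.IsHom N ψ

/-- `M →e^{w} N` : an e-step, i.e. `M →exp^{(q0,w,q0)} N`. -/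
def EStep (M : Autom A) (w : List (Ltr A)) (N : Autom A) : Prop :=
  M.ExpStep M.q0 w M.q0 N

/-- `M →i^{p=q} N` : an i-step; `N` is (isomorphic to) the reduction of the automaton
obtained from `M` by identifying the distinct states `p` and `q`. -/
def IStep (M : Autom A) (p q : M.Q) (N : Autom A) : Prop :=
  p ≠ q ∧ ∃ N' N'', M.IsIdentification p q N' ∧ ReductionOf N' N'' ∧ Isomorphic N'' N

/-- i-step, allowing `p = q` (in which case nothing happens). -/
def IStep' (M : Autom A) (p q : M.Q) (N : Autom A) : Prop :=
  (p = q ∧ M.Isomorphic N) ∨ M.IStep p q N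

/-- `M →i N` : some i-step applies. -/
def IStepAny (M N : Autom A) : Prop := ∃ p q, M.IStep p q N

/-- Some reduced expansion (by a nonempty reduced word) applies. -/
def REStepAny (M N : Autom A) : Prop :=
  ∃ p w q, IsReducedWord w ∧ M.REStep p w q N

/-- `M` is (isomorphic to) `Γ_A(H)` : a reduced inverse automaton with `L(M)ρ = H`. -/
def Represents (M : Autom A) (H : Subgroup (FreeGroup A)) : Prop :=
  M.IsInv ∧ M.IsRed ∧ M.langRho = ↑H

/-- The `q0`-diameter of an automaton: the maximum over all states `q` of the minimal
length of a reduced word labeling a path from `q0` to `q`. -/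
noncomputable def diam (M : Autom A) : ℕ :=
  ⨆ q : M.Q, sInf {n | ∃ u, IsReducedWord u ∧ u.length = n ∧ M.Path M.q0 u q}

end Autom

/-- `S` is a basis of the subgroup `H`: `S` generates `H` and freely so. -/
def IsFreeBasis {G : Type} [Group G] (S : Set G) (H : Subgroup G) : Prop :=
  Subgroup.closure S = H ∧
    Injective (FreeGroup.lift (Subtype.val : S → G) : FreeGroup S →* G)

/-- `H ≤ff K` : `H` is a free factor of `K`. -/
def FreeFactor {G : Type} [Group G] (H K : Subgroup G) : Prop :=
  ∃ B C : Set G, IsFreeBasis B H ∧ IsFreeBasis C K ∧ B ⊆ C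

/-- The rank of a subgroup: the cardinality of a basis (the common value of
the cardinalities of all bases, when `H` is a finite-rank free group). -/
noncomputable def rk {G : Type} [Group G] (H : Subgroup G) : ℕ :=
  sInf {n | ∃ S : Set G, IsFreeBasis S H ∧ S.ncard = n}

/-- `L` is a graphical free factor of `K` with respect to `A`: `Γ_A(L)` embeds
in `Γ_A(K)`. -/
def GraphicalFF {A : Type} (L K : Subgroup (FreeGroup A)) : Prop :=
  L ≤ K ∧ ∃ ML MK : Autom A, ML.Represents L ∧ MK.Represents K ∧
    ∃ ψ : ML.Q → MK.Q, Injective ψ ∧ ML.IsHom MK ψ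

/-- A step (i-step or reduced expansion) from `M` to `N` of cost `c`. -/
def StepCost {A : Type} (M N : Autom A) (c : ℕ) : Prop :=
  (c = 0 ∧ Autom.IStepAny M N) ∨
  (∃ p w q, IsReducedWord w ∧ w.length = c ∧ M.REStep p w q N)

/-- The well-order `≺` on cost sequences. -/
def costLT (k l : List ℕ) : Prop :=
  k.length < l.length ∨
  (k.length = l.length ∧ k.sum < l.sum) ∨
  (k.length = l.length ∧ k.sum = l.sum ∧ List.Lex (· < ·) k l)

/-!
Foldings are controlled by a universal property. In an automaton `M`, call two states equivalent
modulo a set `S` of pairs of states if every homomorphism from `M` to a deterministic dual automaton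
that identifies the pairs in `S` identifies them; this is the congruence `M.foldCon S`. The first
phase of the reduction of a dual automaton `X` computes the quotient `X / X.foldCon ∅`, and it
terminates exactly when only finitely many states are merged with another one.

For deterministic dual `Z`, a homomorphism `f : M → Z` extends to the expansion of `M` by
`(p, xyz, q)` iff `xyz` labels a path from `f p` to `f q`. As `x` already leads from `f p` to `f p'`
and `yz` from `f q'` to `f q`, this happens iff `f p' = f q'`, which is also the condition for `f`
to factor through the identification of `p'` with `q'`. Reading `y` from these states, it is in turn
equivalent to `f p'' = f q''`. Hence the three automata have the same folded quotient.
-/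

namespace Autom

section Paths

variable {A : Type} {M N : Autom A}

theorem ltrInv_ltrInv (a : Ltr A) : Ltr.inv (Ltr.inv a) = a := by
  simp [Ltr.inv]

theorem path_nil_iff {p q : M.Q} : M.Path p [] q ↔ p = q := by
  constructor
  · rintro ⟨⟩
    rfl
  · rintro rfl
    exact .nil p

theorem path_cons_iff {p r : M.Q} {a : Ltr A} {u : List (Ltr A)} :
    M.Path p (a :: u) r ↔ ∃ q, (p, a, q) ∈ M.E ∧ M.Path q u r := by
  constructor
  · rintro (_ | ⟨he, h⟩)
    exact ⟨_, he, h⟩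
  · rintro ⟨q, he, h⟩
    exact .cons he h

theorem path_singleton_iff {p q : M.Q} {a : Ltr A} : M.Path p [a] q ↔ (p, a, q) ∈ M.E := by
  simp [path_cons_iff, path_nil_iff]

theorem path_append_iff {p r : M.Q} {u v : List (Ltr A)} :
    M.Path p (u ++ v) r ↔ ∃ q, M.Path p u q ∧ M.Path q v r := by
  induction u generalizing p with
  | nil => simp [path_nil_iff]
  | cons a u ih =>
    simp only [List.cons_append, path_cons_iff, ih]
    grind

theorem Path.map {f : M.Q → N.Q} (hf : M.IsHom N f) {p q : M.Q} {u : List (Ltr A)}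
    (h : M.Path p u q) : N.Path (f p) u (f q) := by
  unfold Path at h
  induction h with
  | nil => exact .nil _
  | cons he _ ih => exact .cons (hf.2 _ _ _ he) ih

theorem Deterministic.path_target_unique (hM : M.Deterministic) {u : List (Ltr A)}
    {p q q' : M.Q} (h : M.Path p u q) (h' : M.Path p u q') : q = q' := by
  induction u generalizing p with
  | nil => exact (path_nil_iff.1 h).symm.trans (path_nil_iff.1 h')
  | cons a u ih =>
    obtain ⟨s, he, h⟩ := path_cons_iff.1 h
    obtain ⟨s', he', h'⟩ := path_cons_iff.1 h'
    obtain rfl := hM _ _ _ _ he he'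
    exact ih h h'

theorem Deterministic.path_source_unique (hM : M.Deterministic) (hdual : M.Dual)
    {u : List (Ltr A)} {p p' q : M.Q} (h : M.Path p u q) (h' : M.Path p' u q) : p = p' := by
  induction u generalizing p p' with
  | nil => exact (path_nil_iff.1 h).trans (path_nil_iff.1 h').symm
  | cons a u ih =>
    obtain ⟨s, he, h⟩ := path_cons_iff.1 h
    obtain ⟨s', he', h'⟩ := path_cons_iff.1 h'
    obtain rfl := ih h h'
    exact hM _ _ _ _ ((hdual _ _ _).1 he) ((hdual _ _ _).1 he')

theorem Path.exists_states {w : List (Ltr A)} {p q : M.Q} (h : M.Path p w q) :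
    ∃ s : Fin (w.length + 1) → M.Q, s 0 = p ∧ s (Fin.last _) = q ∧
      ∀ i : Fin w.length, (s i.castSucc, w.get i, s i.succ) ∈ M.E := by
  induction w generalizing p with
  | nil => exact ⟨fun _ => p, rfl, path_nil_iff.1 h, fun i => i.elim0⟩
  | cons a w ih =>
    obtain ⟨r, he, h⟩ := path_cons_iff.1 h
    obtain ⟨s, h0, hlast, hs⟩ := ih h
    refine ⟨Fin.cons p s, rfl, hlast, Fin.cases ?_ hs⟩
    change (p, a, s 0) ∈ M.E
    rwa [h0]

theorem exists_edge_of_append_eq {p p' q' q : M.Q} {x v w₁ w₂ : List (Ltr A)} {a : Ltr A}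
    (hx : M.Path p x p') (hv : M.Path q' v q) (h : x ++ v = w₁ ++ a :: w₂) :
    ∃ s t, (s, a, t) ∈ M.E ∧ (M.Path p w₁ s ∨ M.Path t w₂ q) := by
  have source {k : List (Ltr A)} (hk : x = w₁ ++ a :: k) :
      ∃ s t, (s, a, t) ∈ M.E ∧ (M.Path p w₁ s ∨ M.Path t w₂ q) := by
    subst hk
    obtain ⟨s, hs, ht⟩ := path_append_iff.1 hx
    obtain ⟨t, he, -⟩ := path_cons_iff.1 ht
    exact ⟨s, t, he, .inl hs⟩
  have target {k : List (Ltr A)} (hk : v = k ++ a :: w₂) :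
      ∃ s t, (s, a, t) ∈ M.E ∧ (M.Path p w₁ s ∨ M.Path t w₂ q) := by
    subst hk
    obtain ⟨s, -, ht⟩ := path_append_iff.1 hv
    obtain ⟨t, he, ht⟩ := path_cons_iff.1 ht
    exact ⟨s, t, he, .inr ht⟩
  rcases List.append_eq_append_iff.1 h with ⟨k, -, hk⟩ | ⟨_ | ⟨b, k⟩, hk, hl⟩
  · exact target hk
  · exact target (k := []) hl.symm
  · obtain ⟨rfl, -⟩ := List.cons.inj hl
    exact source hk

theorem dual_of_inv_mem (h : ∀ p a q, (p, a, q) ∈ M.E → (q, Ltr.inv a, p) ∈ M.E) : M.Dual :=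
  fun p a q => ⟨h p a q, fun he => ltrInv_ltrInv a ▸ h _ _ _ he⟩

end Paths

section Quotients

variable {A : Type} {M N Z : Autom A}

theorem IsHom.comp {f : M.Q → N.Q} {g : N.Q → Z.Q} (hg : N.IsHom Z g) (hf : M.IsHom N f) :
    M.IsHom Z (g ∘ f) :=
  ⟨(congrArg g hf.1).trans hg.1, fun _ _ _ he => hg.2 _ _ _ (hf.2 _ _ _ he)⟩

theorem Isomorphic.symm (h : M.Isomorphic N) : N.Isomorphic M := by
  obtain ⟨f, hf, hf'⟩ := h
  exact ⟨f.symm, hf', hf⟩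

theorem Isomorphic.trans (h : M.Isomorphic N) (h' : N.Isomorphic Z) : M.Isomorphic Z := by
  obtain ⟨f, hf, hf'⟩ := h
  obtain ⟨g, hg, hg'⟩ := h'
  exact ⟨f.trans g, hg.comp hf, hf'.comp hg'⟩

/-- `φ` presents `N` as a quotient of `M`: it is onto, and the transitions of `N` are exactly the
images of those of `M`. -/
structure IsQuotientMap (M N : Autom A) (φ : M.Q → N.Q) : Prop where
  surjective : Surjective φ
  map_q0 : φ M.q0 = N.q0
  mem_E_iff (s : N.Q) (a : Ltr A) (t : N.Q) :
    (s, a, t) ∈ N.E ↔ ∃ s' t', (s', a, t') ∈ M.E ∧ φ s' = s ∧ φ t' = t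

namespace IsQuotientMap

variable {φ : M.Q → N.Q}

theorem isHom (h : M.IsQuotientMap N φ) : M.IsHom N φ :=
  ⟨h.map_q0, fun s _ t he => (h.mem_E_iff _ _ _).2 ⟨s, t, he, rfl, rfl⟩⟩

theorem dual (h : M.IsQuotientMap N φ) (hM : M.Dual) : N.Dual := by
  refine dual_of_inv_mem fun s a t he => ?_
  obtain ⟨s', t', he', rfl, rfl⟩ := (h.mem_E_iff _ _ _).1 he
  exact h.isHom.2 _ _ _ ((hM _ _ _).1 he')

theorem exists_extension (h : M.IsQuotientMap N φ) {f : M.Q → Z.Q} (hf : M.IsHom Z f)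
    (hker : ∀ a b, φ a = φ b → f a = f b) : ∃ g, N.IsHom Z g ∧ g ∘ φ = f := by
  have hg (a : M.Q) : f (surjInv h.surjective (φ a)) = f a := hker _ _ (surjInv_eq _ _)
  refine ⟨f ∘ surjInv h.surjective, ⟨?_, fun s a t he => ?_⟩, funext hg⟩
  · rw [← h.map_q0, comp_apply, hg, hf.1]
  · obtain ⟨s', t', he', rfl, rfl⟩ := (h.mem_E_iff _ _ _).1 he
    simpa only [comp_apply, hg] using hf.2 _ _ _ he'

theorem isomorphic_of_ker_eq {φ' : M.Q → Z.Q} (h : M.IsQuotientMap N φ)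
    (h' : M.IsQuotientMap Z φ') (hker : ∀ a b, φ a = φ b ↔ φ' a = φ' b) : N.Isomorphic Z := by
  obtain ⟨g, hg, hgφ⟩ := h.exists_extension h'.isHom fun a b => (hker a b).1
  obtain ⟨g', hg', hgφ'⟩ := h'.exists_extension h.isHom fun a b => (hker a b).2
  refine ⟨⟨g, g', ?_, ?_⟩, hg, hg'⟩
  · exact h.surjective.forall.2 fun a => (congrArg g' (congrFun hgφ a)).trans (congrFun hgφ' a)
  · exact h'.surjective.forall.2 fun a => (congrArg g (congrFun hgφ' a)).trans (congrFun hgφ a)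

end IsQuotientMap

theorem isQuotientMap_id (M : Autom A) : M.IsQuotientMap M id :=
  ⟨surjective_id, rfl, fun s _ t => by simp⟩

/-- The quotient of an automaton by an equivalence relation on its states. -/
def quotient (M : Autom A) (r : Setoid M.Q) : Autom A where
  Q := Quotient r
  q0 := Quotient.mk r M.q0
  E := {e | ∃ s t, (s, e.2.1, t) ∈ M.E ∧ Quotient.mk r s = e.1 ∧ Quotient.mk r t = e.2.2}

theorem isQuotientMap_mk (M : Autom A) (r : Setoid M.Q) :
    M.IsQuotientMap (M.quotient r) (Quotient.mk r) :=
  ⟨Quotient.mk_surjective, rfl, fun _ _ _ => Iff.rfl⟩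

theorem IsQuotientMap.isomorphic_quotient {φ : M.Q → N.Q} (h : M.IsQuotientMap N φ)
    {r : Setoid M.Q} (hr : ∀ a b, φ a = φ b ↔ r a b) : N.Isomorphic (M.quotient r) :=
  h.isomorphic_of_ker_eq (M.isQuotientMap_mk r) fun a b => (hr a b).trans Quotient.eq.symm

theorem mem_image_edges_iff {φ : M.Q → N.Q} {s t : N.Q} {a : Ltr A} :
    (∃ e ∈ M.E, (s, a, t) = (φ e.1, e.2.1, φ e.2.2)) ↔
      ∃ s' t', (s', a, t') ∈ M.E ∧ φ s' = s ∧ φ t' = t := by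
  simp only [Prod.exists, Prod.mk.injEq]
  grind

theorem isIdentification_iff {p q : M.Q} :
    M.IsIdentification p q N ↔ ∃ φ : M.Q → N.Q, M.IsQuotientMap N φ ∧
      ∀ a b, φ a = φ b ↔ a = b ∨ (a = p ∧ b = q) ∨ (a = q ∧ b = p) := by
  constructor
  · rintro ⟨φ, hsurj, h0, hker, hE⟩
    exact ⟨φ, ⟨hsurj, h0, fun s a t => (hE _).trans mem_image_edges_iff⟩, hker⟩
  · rintro ⟨φ, h, hker⟩
    exact ⟨φ, h.surjective, h.map_q0, hker,
      fun ⟨s, a, t⟩ => (h.mem_E_iff s a t).trans mem_image_edges_iff.symm⟩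

theorem exists_isIdentification (M : Autom A) (p q : M.Q) : ∃ N, M.IsIdentification p q N := by
  classical
  refine ⟨M.quotient (Setoid.ker (update id q p)), isIdentification_iff.2
    ⟨_, M.isQuotientMap_mk _, fun a b => Quotient.eq.trans ?_⟩⟩
  rw [Setoid.ker_def]
  simp only [update_apply, id_eq]
  grind

theorem IsIdentification.dual {p q : M.Q} (h : M.IsIdentification p q N) (hM : M.Dual) :
    N.Dual := by
  obtain ⟨φ, hφ, -⟩ := isIdentification_iff.1 h
  exact hφ.dual hM

end Quotients

section Pruning

variable {A : Type} {M N X Y : Autom A}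

theorem IsDeletion.of_isomorphic {f : X.Q ≃ Y.Q} (hf : X.IsHom Y f) (hf' : Y.IsHom X f.symm)
    {q : X.Q} (h : X.IsDeletion q N) : Y.IsDeletion (f q) N := by
  obtain ⟨φ, hinj, hrange, h0, hE⟩ := h
  refine ⟨f ∘ φ, f.injective.comp hinj, ?_, (congrArg f h0).trans hf.1, fun e => ?_⟩
  · change Set.range φ = {q}ᶜ at hrange
    rw [Set.range_comp, hrange, Set.image_compl_eq f.bijective, Set.image_singleton]
    rfl
  · rw [hE]
    refine ⟨hf.2 _ _ _, fun he => ?_⟩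
    simpa using hf'.2 _ _ _ he

theorem Red2.of_isomorphic (h : Red2 X N) (hXY : X.Isomorphic Y) : Red2 Y N := by
  obtain ⟨f, hf, hf'⟩ := hXY
  obtain ⟨p, q, a, hq, he, he', honly, hdel⟩ := h
  refine ⟨f p, f q, a, fun h0 => hq (f.injective (h0.trans hf.1.symm)), hf.2 _ _ _ he,
    hf.2 _ _ _ he', ?_, hdel.of_isomorphic hf hf'⟩
  rintro ⟨s, b, t⟩ hst hq'
  have := honly _ (hf'.2 _ _ _ hst) (by simpa only [Equiv.symm_apply_eq] using hq')
  simpa only [Prod.mk.injEq, Equiv.symm_apply_eq] using this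

/-- The second phase of the reduction, up to isomorphism: `N` is obtained from `M` by elementary
reductions of type 2, until none is possible. -/
def PrunesTo (M N : Autom A) : Prop :=
  ∃ N', Relation.ReflTransGen Red2 M N' ∧ (∀ N'', ¬ Red2 N' N'') ∧ N'.Isomorphic N

theorem PrunesTo.of_isomorphic (h : X.PrunesTo N) (hXY : X.Isomorphic Y) : Y.PrunesTo N := by
  obtain ⟨N', hred, hirr, hiso⟩ := h
  rcases hred.cases_head with rfl | ⟨X', hstep, hred⟩
  · exact ⟨Y, .refl, fun N'' h => hirr N'' (h.of_isomorphic hXY.symm), hXY.symm.trans hiso⟩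
  · exact ⟨N', .head (hstep.of_isomorphic hXY) hred, hirr, hiso⟩

theorem prunesTo_congr (h : X.Isomorphic Y) : X.PrunesTo N ↔ Y.PrunesTo N :=
  ⟨fun hX => hX.of_isomorphic h, fun hY => hY.of_isomorphic h.symm⟩

theorem Path.eq_of_forall_mem_eq {q : M.Q} (hloop : ∀ s a, (s, a, q) ∈ M.E → s = q) {p : M.Q}
    {u : List (Ltr A)} (h : M.Path p u q) : p = q := by
  induction u generalizing p with
  | nil => exact path_nil_iff.1 h
  | cons a u ih =>
    obtain ⟨r, he, h⟩ := path_cons_iff.1 h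
    exact hloop _ _ (ih h ▸ he)

-- A path through a state deleted by a reduction of type 2 enters it by `a` and leaves it by `a⁻¹`.
theorem IsRed.not_red2 (hM : M.IsRed) (N : Autom A) : ¬ Red2 M N := by
  rintro ⟨p, q, a, hq, -, -, honly, -⟩
  obtain ⟨u, v, hred, hu, hv⟩ := hM q
  have hpq : p ≠ q := by
    rintro rfl
    refine hq (hu.eq_of_forall_mem_eq fun s b he => ?_).symm
    rcases honly _ he (.inr rfl) with h | h <;> exact congrArg Prod.fst h
  rcases List.eq_nil_or_concat' u with rfl | ⟨u, b, rfl⟩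
  · exact hq (path_nil_iff.1 hu).symm
  rcases v with _ | ⟨c, v⟩
  · exact hq (path_nil_iff.1 hv)
  obtain ⟨s, -, hs⟩ := path_append_iff.1 hu
  obtain ⟨t, ht, -⟩ := path_cons_iff.1 hv
  have hb : b = a := by
    rcases honly _ (path_singleton_iff.1 hs) (.inr rfl) with h | h <;> grind
  have hc : c = Ltr.inv a := by
    rcases honly _ ht (.inl rfl) with h | h <;> grind
  exact hred u v a.1 a.2 (by simp [hb, hc, Ltr.inv])

theorem IsRed.prunesTo_iff (hM : M.IsRed) : M.PrunesTo N ↔ M.Isomorphic N := by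
  refine ⟨?_, fun h => ⟨M, .refl, hM.not_red2, h⟩⟩
  rintro ⟨N', hred, -, hiso⟩
  rcases hred.cases_head with rfl | ⟨M', hstep, -⟩
  · exact hiso
  · exact absurd hstep (hM.not_red2 M')

end Pruning

section FoldingCongruence

variable {A : Type} {M : Autom A} {S T : Set (M.Q × M.Q)}

/-- Homomorphisms into a deterministic dual automaton that identify each pair of states in `S`. -/
structure IsFoldedHom (M : Autom A) (S : Set (M.Q × M.Q)) (Z : Autom A) (f : M.Q → Z.Q) :
    Prop where
  isHom : M.IsHom Z f
  deterministic : Z.Deterministic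
  dual : Z.Dual
  eq_of_mem : ∀ e ∈ S, f e.1 = f e.2

/-- The folding congruence: the states that get identified when `M` is folded into a deterministic
dual automaton in the freest way that identifies each pair of states in `S`. -/
def foldCon (M : Autom A) (S : Set (M.Q × M.Q)) : Setoid M.Q where
  r a b := ∀ (Z : Autom A) (f : M.Q → Z.Q), M.IsFoldedHom S Z f → f a = f b
  iseqv := ⟨fun _ _ _ _ => rfl, fun h Z f hf => (h Z f hf).symm,
    fun h h' Z f hf => (h Z f hf).trans (h' Z f hf)⟩

theorem foldCon_of_mem {e : M.Q × M.Q} (he : e ∈ S) : M.foldCon S e.1 e.2 :=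
  fun _ _ hf => hf.eq_of_mem e he

theorem foldCon_le (h : ∀ e ∈ S, M.foldCon T e.1 e.2) : M.foldCon S ≤ M.foldCon T :=
  fun _ _ hab Z f hf => hab Z f ⟨hf.isHom, hf.deterministic, hf.dual, fun e he => h e he Z f hf⟩

theorem foldCon_target {a b a' b' : M.Q} {u : List (Ltr A)} (h : M.foldCon S a b)
    (ha : M.Path a u a') (hb : M.Path b u b') : M.foldCon S a' b' :=
  fun Z f hf => hf.deterministic.path_target_unique (ha.map hf.isHom)
    (h Z f hf ▸ hb.map hf.isHom)

theorem foldCon_source {a b a' b' : M.Q} {u : List (Ltr A)} (h : M.foldCon S a' b')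
    (ha : M.Path a u a') (hb : M.Path b u b') : M.foldCon S a b :=
  fun Z f hf => hf.deterministic.path_source_unique hf.dual (ha.map hf.isHom)
    (h Z f hf ▸ hb.map hf.isHom)

theorem foldCon_singleton_eq_of_path {p p' q q' : M.Q} {u : List (Ltr A)}
    (hp : M.Path p u p') (hq : M.Path q u q') : M.foldCon {(p, q)} = M.foldCon {(p', q')} := by
  apply le_antisymm <;> refine foldCon_le ?_ <;> rintro _ rfl
  · exact foldCon_source (foldCon_of_mem (e := (p', q')) rfl) hp hq
  · exact foldCon_target (foldCon_of_mem (e := (p, q)) rfl) hp hq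

theorem foldCon_singleton_eq_empty {p q : M.Q} (h : M.foldCon ∅ p q) :
    M.foldCon {(p, q)} = M.foldCon ∅ := by
  apply le_antisymm <;> refine foldCon_le ?_
  · rintro _ rfl
    exact h
  · rintro _ ⟨⟩

theorem Deterministic.foldCon_iff_eq (hdet : M.Deterministic) (hdual : M.Dual)
    (hS : ∀ e ∈ S, e.1 = e.2) {a b : M.Q} : M.foldCon S a b ↔ a = b :=
  ⟨fun h => h M id ⟨M.isQuotientMap_id.isHom, hdet, hdual, hS⟩, fun h => h ▸ (M.foldCon S).refl' a⟩

/-- The elements that are related to some other element. Each identification made during a folding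
lowers the number of these, so folding terminates exactly when there are finitely many. -/
def mergedPoints {α : Type} (r : Setoid α) : Set α := {a | ∃ b, b ≠ a ∧ r a b}

/-- `N` is, up to isomorphism, the result of pruning the quotient of `M` by `r`. The finiteness
condition expresses that the quotient can be reached by finitely many identifications of two
states. -/
def CollapsesTo (M : Autom A) (r : Setoid M.Q) (N : Autom A) : Prop :=
  (mergedPoints r).Finite ∧ (M.quotient r).PrunesTo N

theorem Deterministic.collapsesTo_iff_prunesTo (hdet : M.Deterministic) (hdual : M.Dual)
    (hS : ∀ e ∈ S, e.1 = e.2) {N : Autom A} : M.CollapsesTo (M.foldCon S) N ↔ M.PrunesTo N := by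
  have htriv : mergedPoints (M.foldCon S) = ∅ :=
    Set.eq_empty_of_forall_notMem fun a ⟨b, hne, h⟩ =>
      hne ((hdet.foldCon_iff_eq hdual hS).1 h).symm
  have hiso : M.Isomorphic (M.quotient (M.foldCon S)) :=
    M.isQuotientMap_id.isomorphic_quotient fun a b => (hdet.foldCon_iff_eq hdual hS).symm
  rw [CollapsesTo, htriv, prunesTo_congr hiso]
  exact and_iff_right Set.finite_empty

end FoldingCongruence

section FoldEquivalence

variable {A : Type} {M N X : Autom A} {S : Set (M.Q × M.Q)} {φ : M.Q → X.Q}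

/-- Folding `X` amounts to folding `M` while identifying the pairs of states in `S`: the
homomorphisms from `X` to deterministic dual automata restrict along `φ` exactly to those from `M`
that identify the pairs in `S`, and the states and transitions of `X` that do not come from `M` are
merged with some that do. Up to finitely many states `φ` is bijective. -/
structure IsFoldEquiv (M : Autom A) (S : Set (M.Q × M.Q)) (X : Autom A) (φ : M.Q → X.Q) :
    Prop where
  isHom : M.IsHom X φ
  finite_ker : (mergedPoints (Setoid.ker φ)).Finite
  finite_compl_range : (Set.range φ)ᶜ.Finite
  foldCon_of_mem : ∀ e ∈ S, X.foldCon ∅ (φ e.1) (φ e.2)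
  exists_extension (Z : Autom A) (f : M.Q → Z.Q) :
    M.IsFoldedHom S Z f → ∃ g, X.IsHom Z g ∧ g ∘ φ = f
  exists_state (a : X.Q) : ∃ m, X.foldCon ∅ (φ m) a
  exists_edge (s : X.Q) (a : Ltr A) (t : X.Q) : (s, a, t) ∈ X.E →
    ∃ s' t', (s', a, t') ∈ M.E ∧ X.foldCon ∅ (φ s') s ∧ X.foldCon ∅ (φ t') t

namespace IsFoldEquiv

theorem foldCon_map_iff (h : M.IsFoldEquiv S X φ) {a b : M.Q} :
    X.foldCon ∅ (φ a) (φ b) ↔ M.foldCon S a b := by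
  constructor
  · intro hab Z f hf
    obtain ⟨g, hg, rfl⟩ := h.exists_extension Z f hf
    exact hab Z g ⟨hg, hf.deterministic, hf.dual, fun _ => False.elim⟩
  · intro hab Z g hg
    exact hab Z (g ∘ φ) ⟨hg.isHom.comp h.isHom, hg.deterministic, hg.dual,
      fun e he => h.foldCon_of_mem e he Z g hg⟩

theorem isQuotientMap (h : M.IsFoldEquiv S X φ) :
    M.IsQuotientMap (X.quotient (X.foldCon ∅)) (Quotient.mk _ ∘ φ) where
  surjective := Quotient.forall.2 fun a => (h.exists_state a).imp fun _ hm => Quotient.sound hm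
  map_q0 := congrArg _ h.isHom.1
  mem_E_iff s a t := by
    constructor
    · rintro ⟨s, t, he, rfl, rfl⟩
      obtain ⟨s', t', he, hs, ht⟩ := h.exists_edge s a t he
      exact ⟨s', t', he, Quotient.sound hs, Quotient.sound ht⟩
    · rintro ⟨s', t', he, rfl, rfl⟩
      exact ⟨φ s', φ t', h.isHom.2 _ _ _ he, rfl, rfl⟩

theorem quotient_isomorphic (h : M.IsFoldEquiv S X φ) :
    (X.quotient (X.foldCon ∅)).Isomorphic (M.quotient (M.foldCon S)) :=
  h.isQuotientMap.isomorphic_quotient fun _ _ => Quotient.eq.trans h.foldCon_map_iff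

theorem finite_of_finite_target (h : M.IsFoldEquiv S X φ)
    (hX : (mergedPoints (X.foldCon ∅)).Finite) :
    (mergedPoints (M.foldCon S)).Finite := by
  suffices hdiff :
      (mergedPoints (M.foldCon S) \ mergedPoints (Setoid.ker φ)).Finite from
    (hdiff.union h.finite_ker).subset fun a ha => by simp [ha]
  refine Set.Finite.of_finite_image (f := φ) (hX.subset ?_) ?_
  · rintro _ ⟨a, ⟨⟨b, hne, hab⟩, hker⟩, rfl⟩
    exact ⟨φ b, fun hφ => hker ⟨b, hne, hφ.symm⟩, h.foldCon_map_iff.2 hab⟩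
  · intro a ha b _ hφ
    by_contra hne
    exact ha.2 ⟨b, Ne.symm hne, hφ⟩

theorem finite_of_finite_source (h : M.IsFoldEquiv S X φ)
    (hM : (mergedPoints (M.foldCon S)).Finite) :
    (mergedPoints (X.foldCon ∅)).Finite := by
  choose m hm using h.exists_state
  refine ((hM.image φ).union (h.finite_compl_range.union
    (h.finite_compl_range.image (φ ∘ m)))).subset ?_
  rintro a ⟨b, hne, hab⟩
  rcases em (a ∈ Set.range φ) with ⟨a, rfl⟩ | ha
  · have hamb : M.foldCon S a (m b) :=
      h.foldCon_map_iff.1 ((X.foldCon ∅).trans' hab ((X.foldCon ∅).symm' (hm b)))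
    by_cases hb : m b = a
    · rcases em (b ∈ Set.range φ) with ⟨b, rfl⟩ | hb'
      · exact .inl ⟨a, ⟨b, fun hba => hne (congrArg φ hba), h.foldCon_map_iff.1 hab⟩, rfl⟩
      · exact .inr (.inr ⟨b, hb', congrArg φ hb⟩)
    · exact .inl ⟨a, ⟨m b, hb, hamb⟩, rfl⟩
  · exact .inr (.inl ha)

theorem collapsesTo_iff (h : M.IsFoldEquiv S X φ) :
    X.CollapsesTo (X.foldCon ∅) N ↔ M.CollapsesTo (M.foldCon S) N :=
  and_congr ⟨h.finite_of_finite_target, h.finite_of_finite_source⟩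
    (prunesTo_congr h.quotient_isomorphic)

end IsFoldEquiv

end FoldEquivalence

section Reduction

variable {A : Type} {M N I X Y : Autom A}

theorem IsIdentification.exists_isFoldEquiv {p q : M.Q} (h : M.IsIdentification p q I) :
    ∃ φ : M.Q → I.Q, M.IsFoldEquiv {(p, q)} I φ ∧ Surjective φ ∧ φ p = φ q := by
  obtain ⟨φ, hφ, hker⟩ := isIdentification_iff.1 h
  have hpq : φ p = φ q := (hker p q).2 (.inr (.inl ⟨rfl, rfl⟩))
  refine ⟨φ, ⟨hφ.isHom, ?_, ?_, ?_, fun Z f hf => hφ.exists_extension hf.isHom ?_, ?_, ?_⟩,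
    hφ.surjective, hpq⟩
  · refine (Set.toFinite {p, q}).subset fun a ⟨b, hne, hab⟩ => ?_
    rcases (hker a b).1 hab with heq | ⟨rfl, -⟩ | ⟨rfl, -⟩
    exacts [absurd heq.symm hne, .inl rfl, .inr rfl]
  · simp [hφ.surjective.range_eq]
  · rintro _ rfl
    exact hpq ▸ (I.foldCon ∅).refl' _
  · intro a b hab
    have hf : f p = f q := hf.eq_of_mem (p, q) rfl
    rcases (hker a b).1 hab with rfl | ⟨rfl, rfl⟩ | ⟨rfl, rfl⟩
    exacts [rfl, hf, hf.symm]
  · exact hφ.surjective.forall.2 fun m => ⟨m, (I.foldCon ∅).refl' _⟩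
  · intro s a t he
    obtain ⟨s', t', he', rfl, rfl⟩ := (hφ.mem_E_iff _ _ _).1 he
    exact ⟨s', t', he', (I.foldCon ∅).refl' _, (I.foldCon ∅).refl' _⟩

theorem IsIdentification.collapsesTo_iff {p q : M.Q} (h : M.IsIdentification p q I) :
    I.CollapsesTo (I.foldCon ∅) N ↔ M.CollapsesTo (M.foldCon {(p, q)}) N := by
  obtain ⟨φ, hφ, -⟩ := h.exists_isFoldEquiv
  exact hφ.collapsesTo_iff

theorem IsIdentification.ncard_mergedPoints_lt {p q : M.Q} (hpq : p ≠ q)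
    (h : M.IsIdentification p q I) (hfin : (mergedPoints (M.foldCon {(p, q)})).Finite) :
    (mergedPoints (I.foldCon ∅)).ncard < (mergedPoints (M.foldCon {(p, q)})).ncard := by
  obtain ⟨φ, hφ, hsurj, heq⟩ := h.exists_isFoldEquiv
  have hsub : mergedPoints (I.foldCon ∅) ⊆ φ '' mergedPoints (M.foldCon {(p, q)}) := by
    rintro a ⟨b, hne, hab⟩
    obtain ⟨a, rfl⟩ := hsurj a
    obtain ⟨b, rfl⟩ := hsurj b
    exact ⟨a, ⟨b, fun hba => hne (congrArg φ hba), hφ.foldCon_map_iff.1 hab⟩, rfl⟩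
  have hmem : M.foldCon {(p, q)} p q := foldCon_of_mem (e := (p, q)) rfl
  refine (Set.ncard_le_ncard hsub (hfin.image φ)).trans_lt
    ((Set.ncard_image_le hfin).lt_of_ne fun hcard => hpq ?_)
  exact (Set.ncard_image_iff hfin).1 hcard ⟨q, hpq.symm, hmem⟩
    ⟨p, hpq, (M.foldCon _).symm' hmem⟩ heq

theorem foldCon_of_mem_of_mem {p q r : M.Q} {a : Ltr A} (hp : (r, a, p) ∈ M.E)
    (hq : (r, a, q) ∈ M.E) : M.foldCon ∅ p q :=
  foldCon_target ((M.foldCon ∅).refl' r) (path_singleton_iff.2 hp) (path_singleton_iff.2 hq)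

theorem Red1.dual (h : Red1 X Y) (hX : X.Dual) : Y.Dual := by
  obtain ⟨p, q, r, a, -, -, -, hid⟩ := h
  exact hid.dual hX

theorem Red1.collapsesTo_iff (h : Red1 X Y) :
    Y.CollapsesTo (Y.foldCon ∅) N ↔ X.CollapsesTo (X.foldCon ∅) N := by
  obtain ⟨p, q, r, a, -, hp, hq, hid⟩ := h
  rw [hid.collapsesTo_iff, foldCon_singleton_eq_empty (foldCon_of_mem_of_mem hp hq)]

/-- `N` is the reduction of `M`, up to isomorphism. -/
def ReducesTo (M N : Autom A) : Prop := ∃ N', ReductionOf M N' ∧ N'.Isomorphic N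

theorem Red1.reducesTo (h : Red1 X Y) (hY : Y.ReducesTo N) : X.ReducesTo N := by
  obtain ⟨N', ⟨Y', hred, hY'⟩, hiso⟩ := hY
  exact ⟨N', ⟨Y', .head h hred, hY'⟩, hiso⟩

theorem ReducesTo.collapsesTo (h : X.ReducesTo N) (hX : X.Dual) :
    X.CollapsesTo (X.foldCon ∅) N := by
  obtain ⟨N', ⟨Y, hred1, hdet, hred2, hirr⟩, hiso⟩ := h
  induction hred1 using Relation.ReflTransGen.head_induction_on with
  | refl => exact (hdet.collapsesTo_iff_prunesTo hX fun _ => False.elim).2 ⟨N', hred2, hirr, hiso⟩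
  | head hstep _ ih => exact hstep.collapsesTo_iff.1 (ih (hstep.dual hX))

theorem Deterministic.reducesTo_of_prunesTo (hX : X.Deterministic) (h : X.PrunesTo N) :
    X.ReducesTo N := by
  obtain ⟨N', hred, hirr, hiso⟩ := h
  exact ⟨N', ⟨X, .refl, hX, hred, hirr⟩, hiso⟩

theorem CollapsesTo.reducesTo (hX : X.Dual) (h : X.CollapsesTo (X.foldCon ∅) N) :
    X.ReducesTo N := by
  induction hn : (mergedPoints (X.foldCon ∅)).ncard using Nat.strong_induction_on
    generalizing X with
  | h n ih =>
  by_cases hdet : X.Deterministic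
  · exact hdet.reducesTo_of_prunesTo ((hdet.collapsesTo_iff_prunesTo hX fun _ => False.elim).1 h)
  · simp only [Deterministic, not_forall] at hdet
    obtain ⟨r, a, p, q, hp, hq, hne⟩ := hdet
    obtain ⟨Y, hid⟩ := exists_isIdentification X p q
    have hstep : Red1 X Y := ⟨p, q, r, a, hne, hp, hq, hid⟩
    have hlt := hid.ncard_mergedPoints_lt hne
    rw [foldCon_singleton_eq_empty (foldCon_of_mem_of_mem hp hq)] at hlt
    exact hstep.reducesTo
      (ih _ (hn ▸ hlt h.1) (hid.dual hX) (hstep.collapsesTo_iff.2 h) rfl)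

theorem Dual.reducesTo_iff_collapsesTo (hX : X.Dual) :
    X.ReducesTo N ↔ X.CollapsesTo (X.foldCon ∅) N :=
  ⟨fun h => h.collapsesTo hX, fun h => h.reducesTo hX⟩

theorem IsIdentification.reducesTo_iff {p q : M.Q} (h : M.IsIdentification p q I) (hM : M.Dual) :
    I.ReducesTo N ↔ M.CollapsesTo (M.foldCon {(p, q)}) N := by
  rw [(h.dual hM).reducesTo_iff_collapsesTo, h.collapsesTo_iff]

theorem istep_iff_exists_reducesTo {p q : M.Q} :
    M.IStep p q N ↔ p ≠ q ∧ ∃ I, M.IsIdentification p q I ∧ I.ReducesTo N := by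
  simp only [IStep, ReducesTo, exists_and_left]

theorem istep'_iff_collapsesTo (hdet : M.Deterministic) (hdual : M.Dual) (hred : M.IsRed)
    {p q : M.Q} : M.IStep' p q N ↔ M.CollapsesTo (M.foldCon {(p, q)}) N := by
  rw [IStep', istep_iff_exists_reducesTo]
  rcases eq_or_ne p q with rfl | hpq
  · rw [hdet.collapsesTo_iff_prunesTo hdual (by simp), hred.prunesTo_iff]
    simp
  · simp only [hpq, false_and, false_or, ne_eq, not_false_eq_true, true_and]
    constructor
    · rintro ⟨I, hI, hIN⟩
      exact (hI.reducesTo_iff hdual).1 hIN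
    · intro h
      obtain ⟨I, hI⟩ := exists_isIdentification M p q
      exact ⟨I, hI, (hI.reducesTo_iff hdual).2 h⟩

end Reduction

section Expansion

variable {A : Type} {M N X Z : Autom A} {p q : M.Q} {w : List (Ltr A)}

/-- `X` is the expansion of `M` by `(p, w, q)`, with `φ` the embedding of `M` and `c` the successive
states of the new path. -/
structure IsExpansionMap (M : Autom A) (p : M.Q) (w : List (Ltr A)) (q : M.Q) (X : Autom A)
    (φ : M.Q → X.Q) (c : Fin (w.length + 1) → X.Q) : Prop where
  injective : Injective φ
  map_q0 : φ M.q0 = X.q0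
  state_zero : c 0 = φ p
  state_last : c (Fin.last w.length) = φ q
  notMem_range (i : Fin (w.length + 1)) : 0 < (i : ℕ) → (i : ℕ) < w.length → c i ∉ Set.range φ
  state_eq (i j : Fin (w.length + 1)) : 0 < (i : ℕ) → (i : ℕ) < w.length → c i = c j → i = j
  exhaustive (a : X.Q) : (∃ m, φ m = a) ∨ ∃ i, c i = a
  mem_E_iff (e : X.Q × Ltr A × X.Q) : e ∈ X.E ↔
    (∃ e' ∈ M.E, e = (φ e'.1, e'.2.1, φ e'.2.2)) ∨
      ∃ i : Fin w.length, e = (c i.castSucc, w.get i, c i.succ) ∨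
        e = (c i.succ, Ltr.inv (w.get i), c i.castSucc)

theorem IsExpansion.exists_isExpansionMap (h : M.IsExpansion p w q X) :
    ∃ φ c, M.IsExpansionMap p w q X φ c := by
  obtain ⟨-, φ, c, hinj, h0, hzero, hlast, hrange, heq, hcov, hE⟩ := h
  exact ⟨φ, c, hinj, h0, hzero, hlast, hrange, heq, hcov, hE⟩

theorem exists_isExpansion (M : Autom A) (p q : M.Q) (hw : w ≠ []) :
    ∃ X, M.IsExpansion p w q X := by
  classical
  let Q' := M.Q ⊕ {i : Fin (w.length + 1) // 0 < (i : ℕ) ∧ (i : ℕ) < w.length}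
  let c : Fin (w.length + 1) → Q' := fun i =>
    if h : 0 < (i : ℕ) ∧ (i : ℕ) < w.length then .inr ⟨i, h⟩
    else if (i : ℕ) = 0 then .inl p else .inl q
  have hc {i : Fin (w.length + 1)} (h : 0 < (i : ℕ) ∧ (i : ℕ) < w.length) : c i = .inr ⟨i, h⟩ :=
    dif_pos h
  refine ⟨⟨Q', .inl M.q0, {e | (∃ e' ∈ M.E, e = (.inl e'.1, e'.2.1, .inl e'.2.2)) ∨
    ∃ i : Fin w.length, e = (c i.castSucc, w.get i, c i.succ) ∨
      e = (c i.succ, Ltr.inv (w.get i), c i.castSucc)}⟩, hw, .inl, c,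
    Sum.inl_injective, rfl, by simp [c], by simp [c, hw], ?_, ?_, ?_, fun e => Iff.rfl⟩
  · rintro i hpos hlt ⟨m, hm⟩
    rw [hc ⟨hpos, hlt⟩] at hm
    cases hm
  · intro i j hpos hlt hij
    rw [hc ⟨hpos, hlt⟩] at hij
    simp only [c] at hij
    split_ifs at hij
    exact congrArg Subtype.val (Sum.inr_injective hij)
  · rintro (m | ⟨i, hi⟩)
    · exact .inl ⟨m, rfl⟩
    · exact .inr ⟨i, hc hi⟩

namespace IsExpansionMap

variable {φ : M.Q → X.Q} {c : Fin (w.length + 1) → X.Q}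

theorem isHom (h : M.IsExpansionMap p w q X φ c) : M.IsHom X φ :=
  ⟨h.map_q0, fun s a t he => (h.mem_E_iff _).2 (.inl ⟨(s, a, t), he, rfl⟩)⟩

theorem mem_E (h : M.IsExpansionMap p w q X φ c) (i : Fin w.length) :
    (c i.castSucc, w.get i, c i.succ) ∈ X.E :=
  (h.mem_E_iff _).2 (.inr ⟨i, .inl rfl⟩)

theorem inv_mem_E (h : M.IsExpansionMap p w q X φ c) (i : Fin w.length) :
    (c i.succ, Ltr.inv (w.get i), c i.castSucc) ∈ X.E :=
  (h.mem_E_iff _).2 (.inr ⟨i, .inr rfl⟩)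

theorem edge_cases (h : M.IsExpansionMap p w q X φ c) {P : X.Q → Ltr A → X.Q → Prop}
    (old : ∀ s a t, (s, a, t) ∈ M.E → P (φ s) a (φ t))
    (new : ∀ i : Fin w.length, P (c i.castSucc) (w.get i) (c i.succ))
    (new_inv : ∀ i : Fin w.length, P (c i.succ) (Ltr.inv (w.get i)) (c i.castSucc))
    {s : X.Q} {a : Ltr A} {t : X.Q} (he : (s, a, t) ∈ X.E) : P s a t := by
  rcases (h.mem_E_iff _).1 he with ⟨⟨s', a', t'⟩, he', heq⟩ | ⟨i, heq | heq⟩ <;>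
    simp only [Prod.mk.injEq] at heq <;> obtain ⟨rfl, rfl, rfl⟩ := heq
  exacts [old _ _ _ he', new i, new_inv i]

theorem dual (h : M.IsExpansionMap p w q X φ c) (hM : M.Dual) : X.Dual := by
  refine dual_of_inv_mem fun s a t =>
    h.edge_cases (P := fun s a t => (t, Ltr.inv a, s) ∈ X.E) ?_ ?_ ?_
  · exact fun s a t he => h.isHom.2 _ _ _ ((hM _ _ _).1 he)
  · exact h.inv_mem_E
  · exact fun i => (ltrInv_ltrInv (w.get i)).symm ▸ h.mem_E i

theorem path_take (h : M.IsExpansionMap p w q X φ c) (i : Fin (w.length + 1)) :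
    X.Path (φ p) (w.take i) (c i) := by
  induction i using Fin.induction with
  | zero => exact path_nil_iff.2 h.state_zero.symm
  | succ i ih =>
    rw [Fin.val_succ, List.take_succ_eq_append_getElem i.isLt]
    exact path_append_iff.2 ⟨_, ih, path_singleton_iff.2 (h.mem_E i)⟩

theorem path_drop (h : M.IsExpansionMap p w q X φ c) (i : Fin (w.length + 1)) :
    X.Path (c i) (w.drop i) (φ q) := by
  induction i using Fin.reverseInduction with
  | last => simpa [path_nil_iff] using h.state_last
  | cast i ih =>
    rw [Fin.val_castSucc, List.drop_eq_getElem_cons i.isLt]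
    exact path_cons_iff.2 ⟨_, h.mem_E i, ih⟩

theorem path (h : M.IsExpansionMap p w q X φ c) : X.Path (φ p) w (φ q) := by
  simpa [h.state_zero] using h.path_drop 0

theorem finite_compl_range (h : M.IsExpansionMap p w q X φ c) : (Set.range φ)ᶜ.Finite :=
  (Set.finite_range c).subset fun a ha => (h.exhaustive a).resolve_left ha

theorem factorsThrough (h : M.IsExpansionMap p w q X φ c) {f : M.Q → Z.Q}
    {s : Fin (w.length + 1) → Z.Q} (hs0 : s 0 = f p) (hslast : s (Fin.last _) = f q) :
    FactorsThrough (Sum.elim f s) (Sum.elim φ c) := by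
  have interior_or_end (i : Fin (w.length + 1)) :
      (0 < (i : ℕ) ∧ (i : ℕ) < w.length) ∨ ∃ m, c i = φ m ∧ s i = f m := by
    by_cases h0 : i = 0
    · exact .inr ⟨p, h0 ▸ h.state_zero, h0 ▸ hs0⟩
    by_cases hlast : i = Fin.last _
    · exact .inr ⟨q, hlast ▸ h.state_last, hlast ▸ hslast⟩
    · exact .inl ⟨Fin.pos_of_ne_zero h0, Fin.val_lt_last hlast⟩
  have eq_of_state_eq {i : Fin (w.length + 1)} {m : M.Q} (him : c i = φ m) : s i = f m := by
    rcases interior_or_end i with ⟨hpos, hlt⟩ | ⟨m', hc, hs⟩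
    · exact absurd ⟨m, him.symm⟩ (h.notMem_range i hpos hlt)
    · rw [hs, h.injective (hc.symm.trans him)]
  rintro (m | i) (m' | j) hab <;> simp only [Sum.elim_inl, Sum.elim_inr] at hab ⊢
  · rw [h.injective hab]
  · exact (eq_of_state_eq hab.symm).symm
  · exact eq_of_state_eq hab
  · rcases interior_or_end i with ⟨hpos, hlt⟩ | ⟨m, hc, hs⟩
    · rw [h.state_eq i j hpos hlt hab]
    · rw [hs, eq_of_state_eq (hab.symm.trans hc)]

theorem exists_extension (h : M.IsExpansionMap p w q X φ c) (hZ : Z.Dual) {f : M.Q → Z.Q}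
    (hf : M.IsHom Z f) (hpath : Z.Path (f p) w (f q)) : ∃ g, X.IsHom Z g ∧ g ∘ φ = f := by
  obtain ⟨s, hs0, hslast, hsE⟩ := hpath.exists_states
  let g : X.Q → Z.Q := extend (Sum.elim φ c) (Sum.elim f s) fun _ => Z.q0
  have hg := (h.factorsThrough hs0 hslast).extend_apply fun _ => Z.q0
  have hgφ (m : M.Q) : g (φ m) = f m := hg (.inl m)
  have hgc (i : Fin (w.length + 1)) : g (c i) = s i := hg (.inr i)
  refine ⟨g, ⟨by rw [← h.map_q0, hgφ, hf.1], fun a l b =>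
    h.edge_cases (P := fun a l b => (g a, l, g b) ∈ Z.E) ?_ ?_ ?_⟩, funext hgφ⟩
  · exact fun a l b he => by simpa only [hgφ] using hf.2 _ _ _ he
  · exact fun i => by simpa only [hgc] using hsE i
  · exact fun i => by simpa only [hgc] using (hZ _ _ _).1 (hsE i)

variable {x v : List (Ltr A)} {p' q' : M.Q}

-- An edge of the new path within `x` is merged with an edge of `M` by folding from `p` onwards, an
-- edge within `v` by folding from `q` backwards.
theorem exists_parallel_edge (h : M.IsExpansionMap p w q X φ c) (hw : w = x ++ v)
    (hx : M.Path p x p') (hv : M.Path q' v q) (i : Fin w.length) :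
    ∃ s t, (s, w.get i, t) ∈ M.E ∧ X.foldCon ∅ (φ s) (c i.castSucc) ∧
      X.foldCon ∅ (φ t) (c i.succ) := by
  have hsplit : x ++ v = w.take i ++ w.get i :: w.drop (i + 1) := by
    rw [← hw, List.get_eq_getElem, ← List.drop_eq_getElem_cons i.isLt, List.take_append_drop]
  obtain ⟨s, t, he, hst⟩ := exists_edge_of_append_eq hx hv hsplit
  have hold : X.Path (φ s) [w.get i] (φ t) := path_singleton_iff.2 (h.isHom.2 _ _ _ he)
  have hnew : X.Path (c i.castSucc) [w.get i] (c i.succ) := path_singleton_iff.2 (h.mem_E i)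
  refine ⟨s, t, he, ?_⟩
  rcases hst with hs | ht
  · have hsource : X.foldCon ∅ (φ s) (c i.castSucc) :=
      foldCon_target ((X.foldCon ∅).refl' _) (hs.map h.isHom) (h.path_take i.castSucc)
    exact ⟨hsource, foldCon_target hsource hold hnew⟩
  · have htarget : X.foldCon ∅ (φ t) (c i.succ) :=
      foldCon_source ((X.foldCon ∅).refl' _) (ht.map h.isHom) (h.path_drop i.succ)
    exact ⟨foldCon_source htarget hold hnew, htarget⟩

theorem foldCon_map (h : M.IsExpansionMap p w q X φ c) (hw : w = x ++ v)
    (hx : M.Path p x p') (hv : M.Path q' v q) : X.foldCon ∅ (φ p') (φ q') := by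
  obtain ⟨m, hpm, hmq⟩ := path_append_iff.1 (hw ▸ h.path)
  exact (X.foldCon ∅).trans'
    (foldCon_target ((X.foldCon ∅).refl' _) (hx.map h.isHom) hpm)
    (foldCon_source ((X.foldCon ∅).refl' _) hmq (hv.map h.isHom))

theorem isFoldEquiv (h : M.IsExpansionMap p w q X φ c) (hM : M.Dual) (hw : w = x ++ v)
    (hx : M.Path p x p') (hv : M.Path q' v q) : M.IsFoldEquiv {(p', q')} X φ where
  isHom := h.isHom
  finite_ker := Set.finite_empty.subset fun _ ⟨_, hne, hab⟩ => hne (h.injective hab).symm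
  finite_compl_range := h.finite_compl_range
  foldCon_of_mem := by
    rintro _ rfl
    exact h.foldCon_map hw hx hv
  exists_extension Z f hf := by
    have heq : f p' = f q' := hf.eq_of_mem (p', q') rfl
    refine h.exists_extension hf.dual hf.isHom (hw ▸ path_append_iff.2 ⟨f p', hx.map hf.isHom, ?_⟩)
    exact heq ▸ hv.map hf.isHom
  exists_state a := by
    rcases h.exhaustive a with ⟨m, rfl⟩ | ⟨i, rfl⟩
    · exact ⟨m, (X.foldCon ∅).refl' _⟩
    · induction i using Fin.lastCases with
      | last => exact ⟨q, h.state_last ▸ (X.foldCon ∅).refl' _⟩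
      | cast i =>
        obtain ⟨s, t, -, hs, -⟩ := h.exists_parallel_edge hw hx hv i
        exact ⟨s, hs⟩
  exists_edge s a t := by
    refine h.edge_cases (P := fun s a t => ∃ s' t', (s', a, t') ∈ M.E ∧ X.foldCon ∅ (φ s') s ∧
      X.foldCon ∅ (φ t') t) ?_ (h.exists_parallel_edge hw hx hv) fun i => ?_
    · exact fun s a t he => ⟨s, t, he, (X.foldCon ∅).refl' _, (X.foldCon ∅).refl' _⟩
    · obtain ⟨s, t, he, hs, ht⟩ := h.exists_parallel_edge hw hx hv i
      exact ⟨t, s, (hM _ _ _).1 he, ht, hs⟩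

end IsExpansionMap

theorem IsExpansion.reducesTo_iff {x v : List (Ltr A)} {p' q' : M.Q}
    (h : M.IsExpansion p (x ++ v) q X) (hM : M.Dual) (hx : M.Path p x p') (hv : M.Path q' v q) :
    X.ReducesTo N ↔ M.CollapsesTo (M.foldCon {(p', q')}) N := by
  obtain ⟨φ, c, hφ⟩ := h.exists_isExpansionMap
  rw [(hφ.dual hM).reducesTo_iff_collapsesTo, (hφ.isFoldEquiv hM rfl hx hv).collapsesTo_iff]

theorem expStep_iff_exists_reducesTo :
    M.ExpStep p w q N ↔ ∃ X, M.IsExpansion p w q X ∧ X.ReducesTo N := by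
  simp only [ExpStep, ReducesTo, exists_and_left]

theorem expStep_append_iff_collapsesTo (hM : M.Dual) {x v : List (Ltr A)} {p' q' : M.Q}
    (hw : x ++ v ≠ []) (hx : M.Path p x p') (hv : M.Path q' v q) :
    M.ExpStep p (x ++ v) q N ↔ M.CollapsesTo (M.foldCon {(p', q')}) N := by
  rw [expStep_iff_exists_reducesTo]
  constructor
  · rintro ⟨X, hX, hXN⟩
    exact (hX.reducesTo_iff hM hx hv).1 hXN
  · intro h
    obtain ⟨X, hX⟩ := exists_isExpansion M p q hw
    exact ⟨X, hX, (hX.reducesTo_iff hM hx hv).2 h⟩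

end Expansion

end Autom

open Autom in
theorem expstep_case_istep_general {A : Type} {M : Autom A} (hdet : M.Deterministic)
    (hdual : M.Dual) (hred : M.IsRed) {p q p' p'' q' q'' : M.Q} {x y z : List (Ltr A)}
    (hw : x ++ y ++ z ≠ []) (hx : M.Path p x p') (hy : M.Path p' y p'')
    (hy' : M.Path q' y q'') (hz : M.Path q'' z q) (N : Autom A) :
    (M.ExpStep p (x ++ y ++ z) q N ↔ M.IStep' p' q' N) ∧
      (M.IStep' p' q' N ↔ M.IStep' p'' q'' N) := by
  have hyz : M.Path q' (y ++ z) q := path_append_iff.2 ⟨q'', hy', hz⟩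
  rw [List.append_assoc] at hw ⊢
  rw [expStep_append_iff_collapsesTo hdual hw hx hyz, istep'_iff_collapsesTo hdet hdual hred,
    istep'_iff_collapsesTo hdet hdual hred, foldCon_singleton_eq_of_path hy hy']
  exact ⟨Iff.rfl, Iff.rfl⟩

/-- Fact 2.2 (2): if `|u| + |v| ≥ |w|`, with `u = xy`, `v = yz`, `w = xyz` and
paths `p →x p' →y p''` and `q' →y q'' →z q`, then `M →exp^{(p,w,q)} N` iff
`M →i^{p'=q'} N` iff `M →i^{p''=q''} N` (identifying a state with itself leaves
the automaton unchanged). -/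
theorem expstep_case_istep
    {A : Type} (M : Autom A) (hMinv : M.IsInv) (hMred : M.IsRed)
    (p q : M.Q) (w u v x y z : List (Ltr A)) (hw : w ≠ []) (hwred : IsReducedWord w)
    (hu : u = x ++ y) (hv : v = y ++ z) (hsplit : w = x ++ y ++ z)
    (p' p'' q' q'' : M.Q)
    (hx : M.Path p x p') (hy : M.Path p' y p'')
    (hy' : M.Path q' y q'') (hz : M.Path q'' z q)
    (humax : ∀ u₁, u₁ <+: w → (∃ s, M.Path p u₁ s) → u₁.length ≤ u.length)
    (hvmax : ∀ v₁, v₁ <:+ w → (∃ s, M.Path s v₁ q) → v₁.length ≤ v.length)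
    (N : Autom A) (hNinv : N.IsInv) (hNred : N.IsRed) :
    (M.ExpStep p w q N ↔ M.IStep' p' q' N) ∧
      (M.IStep' p' q' N ↔ M.IStep' p'' q'' N) := by
  subst hsplit
  exact expstep_case_istep_general hMinv.1 hMinv.2.2 hMred hw hx hy hy' hz N
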